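/- Under Conditions (A)–(D), the transition function P_k(u,Γ) of the chain u_k = S(u_{k−1}) + η_k satisfies: for every u ∈ 𝒜 and every r > 0, P_k(u, B_H(r)) > 0 for all sufficiently large k (this uses 0 ∈ supp 𝒟(η₁), which holds by Condition (D)). Consequently, if μ ∈ 𝒫(H) is the unique stationary measure of the chain (i.e. the unique μ with 𝔓₁*μ = μ), then the support of μ coincides with 𝒜. -/

import Mathlib

open MeasureTheory ProbabilityTheory Filter Topology BoundedContinuousFunction
open scoped ENNReal NNReal Pointwise

noncomputable section

/-- The sets `𝒜_k(B)`: `𝒜_0(B) = B`, `𝒜_k(B) = S(𝒜_{k-1}(B)) + 𝒦`. -/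
def attain {H : Type*} [AddCommGroup H] (S : H → H) (K : Set H) (B : Set H) : ℕ → Set H
  | 0 => B
  | n + 1 => S '' attain S K B n + K

/-- The domain of attainability `𝒜(B)` from `B`: the closure of `⋃_k 𝒜_k(B)`. -/
def attainDom {H : Type*} [AddCommGroup H] [TopologicalSpace H]
    (S : H → H) (K : Set H) (B : Set H) : Set H :=
  closure (⋃ n, attain S K B n)

variable {H : Type} [NormedAddCommGroup H] [InnerProductSpace ℝ H] [CompleteSpace H]

/-- The orthogonal projection `𝖯_N` onto the span of the first `N` vectors of an orthonormal
basis. -/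
def projB (e : HilbertBasis ℕ ℝ H) (N : ℕ) (u : H) : H :=
  ∑ j ∈ Finset.range N, e.repr u j • (e j : H)

/-- Condition (A): regularity and stability. -/
def CondA (S : H → H) : Prop :=
  ContDiff ℝ 1 S ∧
  ∀ R r : ℝ, 0 < r → r < R →
    ∃ C : ℝ, 0 < C ∧ ∃ a : ℝ, 0 < a ∧ a < 1 ∧ ∃ n₀ : ℕ, 1 ≤ n₀ ∧
      (∀ u₁ ∈ Metric.closedBall (0 : H) R, ∀ u₂ ∈ Metric.closedBall (0 : H) R,
          ‖S u₁ - S u₂‖ ≤ C * ‖u₁ - u₂‖) ∧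
      ∀ u ∈ Metric.closedBall (0 : H) R, ∀ n : ℕ, n₀ ≤ n →
          ‖S^[n] u‖ ≤ max (a * ‖u‖) r

/-- Condition (B): dissipativity. -/
def CondB (S : H → H) (K : Set H) : Prop :=
  ∃ ρ : ℝ, 0 < ρ ∧ ∃ k₀ : ℝ → ℕ, Monotone k₀ ∧
    ∀ R : ℝ, 0 ≤ R → ∀ k : ℕ, k₀ R ≤ k →
      attain S K (Metric.closedBall 0 R) k ⊆ Metric.closedBall (0 : H) ρ

/-- Condition (C): squeezing. -/
def CondC (S : H → H) (e : HilbertBasis ℕ ℝ H) : Prop :=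
  ∀ R : ℝ, 0 < R → ∃ γ : ℕ → ℝ, (∀ N, 0 < γ N) ∧ Antitone γ ∧
    Tendsto γ atTop (𝓝 0) ∧
    ∀ N : ℕ, ∀ u₁ ∈ Metric.closedBall (0 : H) R, ∀ u₂ ∈ Metric.closedBall (0 : H) R,
      ‖(S u₁ - S u₂) - projB e N (S u₁ - S u₂)‖ ≤ γ N * ‖u₁ - u₂‖

/-- Condition (D): structure of the noise, `η_k = ∑_j b_j ξ_{jk} e_j` with `∑ b_j² < ∞`,
independent scalar `ξ_{jk}` whose laws have Lipschitz densities `p_j` with `p_j(0) > 0` and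
support in `[-1,1]`. -/
def CondD [MeasurableSpace H] {Ω : Type*} [MeasurableSpace Ω] (P : Measure Ω)
    (e : HilbertBasis ℕ ℝ H) (η : ℕ → Ω → H)
    (b : ℕ → ℝ) (ξ : ℕ → ℕ → Ω → ℝ) (p : ℕ → ℝ → ℝ) : Prop :=
  (∀ j, 0 ≤ b j) ∧ Summable (fun j => (b j) ^ 2) ∧
  (∀ k ω, HasSum (fun j => (b j * ξ j k ω) • (e j : H)) (η k ω)) ∧
  (∀ j k, Measurable (ξ j k)) ∧
  iIndepFun (fun jk : ℕ × ℕ => ξ jk.1 jk.2) P ∧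
  (∀ j k, Measure.map (ξ j k) P
      = (volume : Measure ℝ).withDensity fun x => ENNReal.ofReal (p j x)) ∧
  (∀ j, ∃ L : ℝ≥0, LipschitzWith L (p j)) ∧
  (∀ j, 0 < p j 0) ∧
  (∀ j, Function.support (p j) ⊆ Set.Icc (-1 : ℝ) 1)

/-- The trajectory `u_k = S(u_{k-1}) + η_k` of the random dynamical system issued from `u₀`. -/
def traj {Ω : Type*} (S : H → H) (η : ℕ → Ω → H) (u₀ : Ω → H) : ℕ → Ω → H
  | 0 => u₀
  | k + 1 => fun ω => S (traj S η u₀ k ω) + η (k + 1) ω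

/-- The (topological) support of a measure. -/
def msupp {X : Type*} [TopologicalSpace X] [MeasurableSpace X] (μ : Measure X) : Set X :=
  {x | ∀ U ∈ 𝓝 x, 0 < μ U}

/-- The occupation measures `ζ_k = k⁻¹ ∑_{n=0}^{k-1} δ_{x_n}` of a sequence. -/
def occ {X : Type*} [MeasurableSpace X] (x : ℕ → X) (k : ℕ) : ProbabilityMeasure X :=
  if hk : k = 0 then ⟨Measure.dirac (x 0), Measure.dirac.isProbabilityMeasure⟩
  else
    ⟨(k : ℝ≥0∞)⁻¹ • ∑ n ∈ Finset.range k, Measure.dirac (x n), by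
      refine ⟨?_⟩
      simp only [Measure.smul_apply, Measure.finset_sum_apply, measure_univ,
        Finset.sum_const, Finset.card_range, nsmul_eq_mul, mul_one, smul_eq_mul]
      exact ENNReal.inv_mul_cancel (Nat.cast_ne_zero.mpr hk) (ENNReal.natCast_ne_top k)⟩

/-- Large deviation principle for the sequence of events `prob k` (the laws of random
probability measures in `Z`), with rate function `I`. -/
def LDPof {Z : Type*} [TopologicalSpace Z] (prob : ℕ → Set Z → ℝ≥0∞) (I : Z → ℝ≥0∞) : Prop :=
  (∀ F : Set Z, IsClosed F →
    Filter.limsup (fun k : ℕ => (((k : ℝ)⁻¹ : ℝ) : EReal) * ENNReal.log (prob k F)) atTop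
      ≤ -(⨅ σ ∈ F, (I σ : EReal))) ∧
  (∀ G : Set Z, IsOpen G →
    -(⨅ σ ∈ G, (I σ : EReal))
      ≤ Filter.liminf (fun k : ℕ => (((k : ℝ)⁻¹ : ℝ) : EReal) * ENNReal.log (prob k G)) atTop)

/-- A good rate function: lower semicontinuous with compact level sets. -/
def GoodRate {Z : Type*} [TopologicalSpace Z] (I : Z → ℝ≥0∞) : Prop :=
  LowerSemicontinuous I ∧ ∀ c : ℝ≥0∞, c ≠ ⊤ → IsCompact {σ : Z | I σ ≤ c}

/-- The `k`-step transition function `P_k(u,Γ)` of the chain started at the deterministic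
point `u`. -/
def transP {H : Type} [NormedAddCommGroup H] [InnerProductSpace ℝ H] [CompleteSpace H]
    {Ω : Type} [MeasurableSpace Ω] (P : Measure Ω) (S : H → H) (η : ℕ → Ω → H)
    (k : ℕ) (u : H) (Γ : Set H) : ℝ≥0∞ :=
  P {ω | traj S η (fun _ => u) k ω ∈ Γ}

/-!
A Feller kernel pushes supports forward: if `x ∈ supp μ` and `y ∈ supp P₁(x, ·)`, then
`y ∈ supp 𝔓₁*μ`. As `0` lies in the support of the noise, the chain started at `u` charges every
neighbourhood of `Sᵏ u`, and `Sᵏ u → 0` by dissipativity; this is the positivity claim. For a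
stationary `μ` the same principle makes `supp μ` invariant under `S` and under `u ↦ S u + w` with
`w ∈ 𝒦`. Being closed and nonempty, it contains `0 = lim Sᵏ u`, hence all of `𝒜`. Conversely, the
squeezing condition makes `𝒜` compact, so the Krylov–Bogoliubov averages of a point of `𝒜`
accumulate at a stationary measure carried by `𝒜`, and by uniqueness this measure is `μ`.
-/

section Support

variable {X Y ι Ω : Type*} [TopologicalSpace X] [MeasurableSpace X]
  [TopologicalSpace Y] [MeasurableSpace Y] [MeasurableSpace Ω] {P : Measure Ω}

lemma msupp_eq_support (μ : Measure X) : msupp μ = μ.support :=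
  Set.ext fun x => (Measure.mem_support_iff_forall x).symm

lemma mem_support_map_iff [OpensMeasurableSpace X] {f : Ω → X} (hf : AEMeasurable f P) {x : X} :
    x ∈ (P.map f).support ↔ ∀ U ∈ 𝓝 x, 0 < P (f ⁻¹' U) := by
  rw [Measure.mem_support_iff_forall]
  refine ⟨fun h U hU => ?_, fun h U hU => (h U hU).trans_le (Measure.le_map_apply hf U)⟩
  calc 0 < P.map f (interior U) := h _ (interior_mem_nhds.2 hU)
    _ = P (f ⁻¹' interior U) := Measure.map_apply_of_aemeasurable hf isOpen_interior.measurableSet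
    _ ≤ P (f ⁻¹' U) := measure_mono (Set.preimage_mono interior_subset)

lemma map_mem_support_map [OpensMeasurableSpace X] [BorelSpace Y]
    {μ : Measure X} {f : X → Y} (hf : Continuous f) {x : X} (hx : x ∈ μ.support) :
    f x ∈ (μ.map f).support :=
  (mem_support_map_iff hf.aemeasurable).2 fun _ hU =>
    (Measure.mem_support_iff_forall x).1 hx _ (hf.continuousAt hU)

lemma mem_support_withDensity [OpensMeasurableSpace X] {μ : Measure X} [μ.IsOpenPosMeasure]
    {f : X → ℝ≥0∞} (hf : Continuous f) {x : X} (hx : f x ≠ 0) :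
    x ∈ (μ.withDensity f).support := by
  refine (Measure.mem_support_iff_forall x).2 fun U hU => pos_iff_ne_zero.2 fun h0 => ?_
  have hnhds : {y | f y ≠ 0} ∩ U ∈ 𝓝 x :=
    inter_mem (hf.continuousAt.eventually_ne hx) hU
  exact (μ.measure_pos_of_mem_nhds hnhds).ne' ((withDensity_apply_eq_zero hf.measurable).1 h0)

lemma measure_pi_preimage_pos_of_mem_support {E : ι → Type*} [∀ i, TopologicalSpace (E i)]
    [∀ i, MeasurableSpace (E i)] [∀ i, OpensMeasurableSpace (E i)]
    {X : ∀ i, Ω → E i} (hX : iIndepFun X P) (hmeas : ∀ i, Measurable (X i)) {x : ∀ i, E i}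
    (hx : ∀ i, x i ∈ (P.map (X i)).support) {U : Set (∀ i, E i)} (hU : U ∈ 𝓝 x) :
    0 < P ((fun ω i => X i ω) ⁻¹' U) := by
  rw [nhds_pi, Filter.mem_pi'] at hU
  obtain ⟨I, V, hV, hVU⟩ := hU
  have hpos : 0 < P (⋂ i ∈ I, X i ⁻¹' interior (V i)) := by
    rw [hX.measure_inter_preimage_eq_mul I fun i _ => isOpen_interior.measurableSet]
    refine pos_iff_ne_zero.2 (Finset.prod_ne_zero_iff.2 fun i _ => ne_of_gt ?_)
    exact (mem_support_map_iff (hmeas i).aemeasurable).1 (hx i) _ (interior_mem_nhds.2 (hV i))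
  refine hpos.trans_le (measure_mono fun ω hω => hVU fun i hi => ?_)
  exact interior_subset (Set.mem_iInter₂.1 hω i hi)

end Support

section Feller

variable {X Y : Type*} [TopologicalSpace X] [MeasurableSpace X]
  [TopologicalSpace Y] [MeasurableSpace Y]

/-- The Feller property of a kernel: it maps bounded continuous functions to continuous ones. -/
def IsFeller (κ : Kernel X Y) : Prop :=
  ∀ f : Y →ᵇ ℝ, Continuous fun x => ∫ y, f y ∂κ x

namespace IsFeller

variable {κ : Kernel X Y} [IsMarkovKernel κ]

lemma eventually_measure_pos [OpensMeasurableSpace Y] [HasOuterApproxClosed Y] (hκ : IsFeller κ)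
    {x : X} {U : Set Y} (hU : IsOpen U) (hpos : 0 < κ x U) : ∀ᶠ z in 𝓝 x, 0 < κ z U := by
  let law : X → ProbabilityMeasure Y := fun z => ⟨κ z, inferInstance⟩
  have hlaw : Tendsto law (𝓝 x) (𝓝 (law x)) :=
    ProbabilityMeasure.tendsto_iff_forall_integral_tendsto.2 fun f => (hκ f).tendsto x
  exact eventually_lt_of_lt_liminf
    (hpos.trans_le (ProbabilityMeasure.le_liminf_measure_open_of_tendsto hlaw hU))

lemma mem_support_comp [OpensMeasurableSpace X] [OpensMeasurableSpace Y] [HasOuterApproxClosed Y]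
    (hκ : IsFeller κ) {μ : Measure X} {x : X} {y : Y} (hx : x ∈ μ.support)
    (hy : y ∈ (κ x).support) : y ∈ (κ ∘ₘ μ).support := by
  rw [Measure.mem_support_iff_forall] at hx hy ⊢
  intro U hU
  have hmeas : MeasurableSet (interior U) := isOpen_interior.measurableSet
  have hpos : ∀ᶠ z in 𝓝 x, 0 < κ z (interior U) :=
    hκ.eventually_measure_pos isOpen_interior (hy _ (interior_mem_nhds.2 hU))
  refine lt_of_lt_of_le ?_ (measure_mono interior_subset)
  rw [Measure.bind_apply hmeas κ.aemeasurable, lintegral_pos_iff_support (κ.measurable_coe hmeas)]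
  exact (hx _ hpos).trans_le (measure_mono fun z hz => hz.ne')

end IsFeller

end Feller

section KrylovBogoliubov

variable {X : Type*} [MeasurableSpace X]

/-- The dual Markov operator `𝔓*` of a Markov kernel, acting on probability measures. -/
def dualMarkov (κ : Kernel X X) [IsMarkovKernel κ] (μ : ProbabilityMeasure X) :
    ProbabilityMeasure X :=
  ⟨κ ∘ₘ (μ : Measure X), inferInstance⟩

/-- The Cesàro mean `(n + 1)⁻¹ ∑_{i ≤ n} μ i` of a sequence of probability measures; averaging
`n + 1` terms keeps it a probability measure at `n = 0`. -/
def cesaroMean (μ : ℕ → ProbabilityMeasure X) (n : ℕ) : ProbabilityMeasure X :=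
  ⟨((n : ℝ≥0∞) + 1)⁻¹ • ∑ i ∈ Finset.range (n + 1), (μ i : Measure X), ⟨by
    simp only [Measure.smul_apply, Measure.finsetSum_apply, measure_univ, Finset.sum_const,
      Finset.card_range, nsmul_eq_mul, mul_one, smul_eq_mul, Nat.cast_add, Nat.cast_one]
    exact ENNReal.inv_mul_cancel (by simp) (by finiteness)⟩⟩

lemma coe_cesaroMean (μ : ℕ → ProbabilityMeasure X) (n : ℕ) :
    (cesaroMean μ n : Measure X) =
      ((n : ℝ≥0∞) + 1)⁻¹ • ∑ i ∈ Finset.range (n + 1), (μ i : Measure X) := rfl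

lemma cesaroMean_apply_eq_zero {μ : ℕ → ProbabilityMeasure X} {A : Set X}
    (hμ : ∀ i, (μ i : Measure X) A = 0) (n : ℕ) : (cesaroMean μ n : Measure X) A = 0 := by
  simp only [coe_cesaroMean, Measure.smul_apply, Measure.finsetSum_apply, hμ,
    Finset.sum_const_zero, smul_zero]

lemma dualMarkov_cesaroMean (κ : Kernel X X) [IsMarkovKernel κ] (μ : ℕ → ProbabilityMeasure X)
    (n : ℕ) : dualMarkov κ (cesaroMean μ n) = cesaroMean (fun i => dualMarkov κ (μ i)) n := by
  have comp_sum (s : Finset ℕ) :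
      κ ∘ₘ (∑ i ∈ s, (μ i : Measure X)) = ∑ i ∈ s, κ ∘ₘ (μ i : Measure X) := by
    induction s using Finset.cons_induction with
    | empty => simp only [Finset.sum_empty, Measure.bind_zero_left]
    | cons i s hi ih => rw [Finset.sum_cons, Finset.sum_cons, Measure.comp_add, ih]
  exact Subtype.ext ((Measure.comp_smul _).trans (congrArg _ (comp_sum _)))

lemma iterate_dualMarkov_compl_eq_zero {κ : Kernel X X} [IsMarkovKernel κ] {A : Set X}
    (hA : MeasurableSet A) (hκA : ∀ x ∈ A, ∀ᵐ y ∂κ x, y ∈ A) {μ : ProbabilityMeasure X}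
    (hμ : (μ : Measure X) Aᶜ = 0) (n : ℕ) : ((dualMarkov κ)^[n] μ : Measure X) Aᶜ = 0 := by
  induction n with
  | zero => exact hμ
  | succ n ih =>
    rw [Function.iterate_succ_apply']
    exact Measure.ae_comp_of_ae_ae hA (Eventually.mono (mem_ae_iff.2 ih) hκA)

variable [TopologicalSpace X]

lemma integral_cesaroMean [OpensMeasurableSpace X] (μ : ℕ → ProbabilityMeasure X) (n : ℕ)
    (f : X →ᵇ ℝ) :
    ∫ x, f x ∂(cesaroMean μ n : Measure X) =
      ((n : ℝ) + 1)⁻¹ * ∑ i ∈ Finset.range (n + 1), ∫ x, f x ∂(μ i : Measure X) := by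
  rw [coe_cesaroMean, integral_smul_measure,
    integral_finsetSum_measure fun i _ => f.integrable _, smul_eq_mul, ENNReal.toReal_inv,
    ENNReal.toReal_add (by finiteness) (by finiteness), ENNReal.toReal_natCast,
    ENNReal.toReal_one]

lemma tendsto_integral_cesaroMean_shift_sub [OpensMeasurableSpace X]
    (μ : ℕ → ProbabilityMeasure X) (f : X →ᵇ ℝ) :
    Tendsto (fun n => ∫ x, f x ∂(cesaroMean (fun i => μ (i + 1)) n : Measure X) -
      ∫ x, f x ∂(cesaroMean μ n : Measure X)) atTop (𝓝 0) := by
  have hlim : Tendsto (fun n : ℕ => 1 / ((n : ℝ) + 1) * (2 * ‖f‖)) atTop (𝓝 0) := by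
    simpa using tendsto_one_div_add_atTop_nhds_zero_nat.mul_const (2 * ‖f‖)
  refine squeeze_zero_norm (fun n => ?_) hlim
  rw [integral_cesaroMean, integral_cesaroMean, ← mul_sub, ← Finset.sum_sub_distrib,
    Finset.sum_range_sub fun i => ∫ x, f x ∂(μ i : Measure X), norm_mul, one_div,
    Real.norm_of_nonneg (by positivity)]
  gcongr
  calc _ ≤ ‖∫ x, f x ∂(μ (n + 1) : Measure X)‖ + ‖∫ x, f x ∂(μ 0 : Measure X)‖ :=
        norm_sub_le _ _
    _ ≤ 2 * ‖f‖ := by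
        linarith [f.norm_integral_le_norm (μ (n + 1) : Measure X),
          f.norm_integral_le_norm (μ 0 : Measure X)]

lemma IsFeller.continuous_dualMarkov [OpensMeasurableSpace X] {κ : Kernel X X}
    [IsMarkovKernel κ] (hκ : IsFeller κ) : Continuous (dualMarkov κ) := by
  refine ProbabilityMeasure.continuous_iff_forall_continuous_integral.2 fun f => ?_
  let κf : X →ᵇ ℝ := BoundedContinuousFunction.ofNormedAddCommGroup
    (fun x => ∫ y, f y ∂κ x) (hκ f) ‖f‖ fun x => f.norm_integral_le_norm (κ x)
  have hdual (μ : ProbabilityMeasure X) :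
      ∫ y, f y ∂(dualMarkov κ μ : Measure X) = ∫ x, κf x ∂(μ : Measure X) := by
    have hint : Integrable f (dualMarkov κ μ : Measure X) := f.integrable _
    rw [dualMarkov, ProbabilityMeasure.coe_mk, Measure.comp_eq_comp_const_apply] at hint ⊢
    rw [Kernel.integral_comp hint, Kernel.const_apply]
    rfl
  simpa only [hdual] using ProbabilityMeasure.continuous_integral_boundedContinuousFunction κf

lemma exists_tendsto_ultrafilter_of_measure_compl_eq_zero [T2Space X] [BorelSpace X]
    {A : Set X} (hA : IsCompact A) {μ : ℕ → ProbabilityMeasure X}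
    (hμ : ∀ n, (μ n : Measure X) Aᶜ = 0) (F : Ultrafilter ℕ) :
    ∃ m : ProbabilityMeasure X, (m : Measure X) A = 1 ∧ Tendsto μ F (𝓝 m) := by
  have null_iff (m : ProbabilityMeasure X) : m Aᶜ ≤ 0 ↔ (m : Measure X) Aᶜ = 0 := by
    rw [nonpos_iff_eq_zero, ProbabilityMeasure.null_iff_toMeasure_null]
  have hcompact : IsCompact {m : ProbabilityMeasure X | ∀ _ : ℕ, m Aᶜ ≤ (0 : ℝ≥0)} :=
    isCompact_setOfPred_probabilityMeasure_mass_eq_compl_isCompact_le tendsto_const_nhds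
      (fun _ => hA) (Or.inr monotone_const)
  obtain ⟨m, hm, hlim⟩ := hcompact.ultrafilter_le_nhds' (F.map μ)
    (mem_map.2 (Eventually.of_forall fun n _ => (null_iff (μ n)).2 (hμ n)))
  exact ⟨m, (prob_compl_eq_zero_iff hA.measurableSet).1 ((null_iff m).1 (hm 0)), hlim⟩

theorem IsFeller.exists_invariant_of_isCompact [T2Space X] [BorelSpace X]
    [HasOuterApproxClosed X] {κ : Kernel X X} [IsMarkovKernel κ] (hκ : IsFeller κ)
    {A : Set X} (hA : IsCompact A) (hne : A.Nonempty) (hκA : ∀ x ∈ A, ∀ᵐ y ∂κ x, y ∈ A) :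
    ∃ m : ProbabilityMeasure X, κ.Invariant (m : Measure X) ∧ (m : Measure X) A = 1 := by
  obtain ⟨x₀, hx₀⟩ := hne
  let δ : ProbabilityMeasure X := ⟨Measure.dirac x₀, Measure.dirac.isProbabilityMeasure⟩
  let μ : ℕ → ProbabilityMeasure X := fun n => (dualMarkov κ)^[n] δ
  have hδA : (δ : Measure X) Aᶜ = 0 := (mem_ae_dirac_iff hA.measurableSet).2 hx₀
  have hμA (n : ℕ) : (μ n : Measure X) Aᶜ = 0 :=
    iterate_dualMarkov_compl_eq_zero hA.measurableSet hκA hδA n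
  have hshift (n : ℕ) :
      dualMarkov κ (cesaroMean μ n) = cesaroMean (fun i => μ (i + 1)) n := by
    rw [dualMarkov_cesaroMean]
    exact congrArg (cesaroMean · n) (funext fun i => (Function.iterate_succ_apply' _ i _).symm)
  let F : Ultrafilter ℕ := Ultrafilter.of atTop
  obtain ⟨m, hmA, hm⟩ := exists_tendsto_ultrafilter_of_measure_compl_eq_zero hA
    (cesaroMean_apply_eq_zero hμA) F
  have hdual : Tendsto (fun n => cesaroMean (fun i => μ (i + 1)) n) F (𝓝 (dualMarkov κ m)) := by
    simpa only [Function.comp_def, hshift] using (hκ.continuous_dualMarkov.tendsto m).comp hm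
  refine ⟨m, ext_of_forall_integral_eq_of_IsFiniteMeasure fun f => ?_, hmA⟩
  rw [ProbabilityMeasure.tendsto_iff_forall_integral_tendsto] at hm hdual
  exact sub_eq_zero.1 (tendsto_nhds_unique ((hdual f).sub (hm f))
    ((tendsto_integral_cesaroMean_shift_sub μ f).mono_left (Ultrafilter.of_le _)))

end KrylovBogoliubov

section StepKernel

variable {E : Type*} [NormedAddCommGroup E] [MeasurableSpace E] [BorelSpace E]
  [SecondCountableTopology E] {S : E → E} {ν : Measure E}

/-- The one-step transition kernel `P₁(u, ·)` of the chain `u ↦ S u + η`, where `η` has law `ν`. -/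
def stepKernel (hS : Measurable S) (ν : Measure E) : Kernel E E :=
  (Kernel.deterministic S hS ×ₖ Kernel.const E ν).map fun x => x.1 + x.2

instance stepKernel.instIsMarkovKernel (hS : Measurable S) [IsProbabilityMeasure ν] :
    IsMarkovKernel (stepKernel hS ν) :=
  Kernel.IsMarkovKernel.map _ measurable_add

lemma stepKernel_apply (hS : Measurable S) [SFinite ν] (u : E) :
    stepKernel hS ν u = ν.map (S u + ·) := by
  rw [stepKernel, Kernel.map_apply _ measurable_add, Kernel.prod_apply,
    Kernel.deterministic_apply, Kernel.const_apply, Measure.dirac_prod,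
    Measure.map_map measurable_add measurable_prodMk_left]
  rfl

lemma isFeller_stepKernel (hS : Continuous S) [IsFiniteMeasure ν] :
    IsFeller (stepKernel hS.measurable ν) := fun f => by
  have hint (u : E) :
      ∫ v, f v ∂stepKernel hS.measurable ν u = ∫ w, f (S u + w) ∂ν := by
    rw [stepKernel_apply, integral_map (measurable_const_add _).aemeasurable
      f.continuous.aestronglyMeasurable]
  simp only [hint]
  exact continuous_of_dominated (fun u => by fun_prop)
    (fun u => .of_forall fun w => f.norm_coe_le_norm _) (integrable_const ‖f‖)
    (.of_forall fun w => by fun_prop)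

lemma add_mem_support_stepKernel (hS : Measurable S) [SFinite ν] (u : E) {w : E}
    (hw : w ∈ ν.support) : S u + w ∈ (stepKernel hS ν u).support := by
  rw [stepKernel_apply]
  exact map_mem_support_map (continuous_const_add (S u)) hw

lemma ae_stepKernel_iff (hS : Measurable S) [SFinite ν] {A : Set E} (hA : MeasurableSet A)
    (u : E) : (∀ᵐ v ∂stepKernel hS ν u, v ∈ A) ↔ ∀ᵐ w ∂ν, S u + w ∈ A := by
  rw [stepKernel_apply]
  exact ae_map_iff (measurable_const_add _).aemeasurable hA

lemma stepKernel_comp (hS : Measurable S) [SFinite ν] (μ : Measure E) :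
    stepKernel hS ν ∘ₘ μ = (μ.prod ν).map fun x => S x.1 + x.2 := by
  have hstep : Measurable fun x : E × E => S x.1 + x.2 := by fun_prop
  ext Γ hΓ
  rw [Measure.bind_apply hΓ (Kernel.aemeasurable _), Measure.map_apply hstep hΓ,
    Measure.prod_apply (hstep hΓ)]
  refine lintegral_congr fun u => ?_
  rw [stepKernel_apply, Measure.map_apply (measurable_const_add _) hΓ]
  rfl

lemma map_add_eq_stepKernel_comp (hS : Measurable S) {Ω : Type*} [MeasurableSpace Ω]
    {P : Measure Ω} [IsFiniteMeasure P] {X Z : Ω → E} (hX : Measurable X) (hZ : Measurable Z)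
    (hXZ : IndepFun X Z P) :
    P.map (fun ω => S (X ω) + Z ω) = stepKernel hS (P.map Z) ∘ₘ P.map X := by
  rw [stepKernel_comp, ← (indepFun_iff_map_prod_eq_prod_map_map hX.aemeasurable
    hZ.aemeasurable).1 hXZ, Measure.map_map (by fun_prop) (hX.prodMk hZ)]
  rfl

lemma add_mem_support_of_invariant (hS : Continuous S) [IsProbabilityMeasure ν]
    {μ : Measure E} (hμ : (stepKernel hS.measurable ν).Invariant μ) {u w : E}
    (hu : u ∈ μ.support) (hw : w ∈ ν.support) : S u + w ∈ μ.support := by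
  have := (isFeller_stepKernel hS).mem_support_comp hu
    (add_mem_support_stepKernel hS.measurable u hw)
  rwa [hμ.def] at this

lemma zero_mem_support_of_invariant (hS : Continuous S) [IsProbabilityMeasure ν]
    (horbit : ∀ u, Tendsto (fun n => S^[n] u) atTop (𝓝 0)) (hν : 0 ∈ ν.support)
    {μ : Measure E} [NeZero μ] (hμ : (stepKernel hS.measurable ν).Invariant μ) :
    0 ∈ μ.support := by
  obtain ⟨u, hu⟩ := Measure.nonempty_support (NeZero.ne μ)
  have hmem (n : ℕ) : S^[n] u ∈ μ.support := by
    induction n with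
    | zero => exact hu
    | succ n ih =>
      rw [Function.iterate_succ_apply', ← add_zero (S _)]
      exact add_mem_support_of_invariant hS hμ ih hν
  exact Measure.isClosed_support.mem_of_tendsto (horbit u) (.of_forall hmem)

end StepKernel

section AttainableSets

variable {E : Type*} [AddCommGroup E] {S : E → E} {K B : Set E}

lemma subset_attainDom [TopologicalSpace E] : B ⊆ attainDom S K B :=
  (Set.subset_iUnion (attain S K B) 0).trans subset_closure

lemma attain_subset_of_forall_add_mem {F : Set E} (hBF : B ⊆ F)
    (hF : ∀ u ∈ F, ∀ w ∈ K, S u + w ∈ F) (n : ℕ) : attain S K B n ⊆ F := by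
  induction n with
  | zero => exact hBF
  | succ n ih =>
    rintro _ ⟨_, ⟨u, hu, rfl⟩, w, hw, rfl⟩
    exact hF u (ih hu) w hw

lemma attainDom_subset_of_isClosed [TopologicalSpace E] {F : Set E} (hF : IsClosed F)
    (hBF : B ⊆ F) (hadd : ∀ u ∈ F, ∀ w ∈ K, S u + w ∈ F) : attainDom S K B ⊆ F :=
  closure_minimal (Set.iUnion_subset (attain_subset_of_forall_add_mem hBF hadd)) hF

variable [TopologicalSpace E]

lemma add_mem_attainDom [ContinuousAdd E] (hS : Continuous S) {u w : E}
    (hu : u ∈ attainDom S K B) (hw : w ∈ K) : S u + w ∈ attainDom S K B := by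
  refine map_mem_closure (f := fun u => S u + w) (by fun_prop) hu fun v hv => ?_
  obtain ⟨n, hn⟩ := Set.mem_iUnion.1 hv
  exact Set.mem_iUnion.2 ⟨n + 1, Set.add_mem_add ⟨v, hn, rfl⟩ hw⟩

lemma isCompact_attain [ContinuousAdd E] (hS : Continuous S) (hK : IsCompact K)
    (hB : IsCompact B) (n : ℕ) : IsCompact (attain S K B n) := by
  induction n with
  | zero => exact hB
  | succ n ih => exact (ih.image hS).add hK

lemma isCompact_attainDom [ContinuousAdd E] [T2Space E] (hS : Continuous S) (hK : IsCompact K)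
    (hB : IsCompact B) {D : Set E} (hD : IsCompact (closure (S '' D))) {k₀ : ℕ}
    (hBD : ∀ k, k₀ ≤ k → attain S K B k ⊆ D) : IsCompact (attainDom S K B) := by
  let head : Set E := ⋃ n ∈ Finset.range (k₀ + 1), attain S K B n
  have hcompact : IsCompact (head ∪ (closure (S '' D) + K)) :=
    (Finset.isCompact_biUnion _ fun n _ => isCompact_attain hS hK hB n).union (hD.add hK)
  refine hcompact.of_isClosed_subset isClosed_closure
    (closure_minimal (Set.iUnion_subset fun n => ?_) hcompact.isClosed)
  rcases lt_or_ge n (k₀ + 1) with hn | hn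
  · exact (Set.subset_biUnion_of_mem (u := attain S K B) (Finset.mem_range.2 hn)).trans
      Set.subset_union_left
  · obtain ⟨m, rfl⟩ := Nat.exists_eq_add_of_le' (Nat.one_le_of_lt hn)
    refine Set.Subset.trans ?_ Set.subset_union_right
    exact Set.add_subset_add_right
      ((Set.image_mono (hBD m (Nat.le_of_succ_le_succ hn))).trans subset_closure)

end AttainableSets

section StationaryMeasure

variable {E : Type*} [NormedAddCommGroup E] [MeasurableSpace E] [BorelSpace E]
  [SecondCountableTopology E] {S : E → E} {ν : Measure E} [IsProbabilityMeasure ν]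

lemma attainDom_subset_support_of_invariant (hS : Continuous S)
    (horbit : ∀ u, Tendsto (fun n => S^[n] u) atTop (𝓝 0)) (hν : 0 ∈ ν.support)
    {μ : Measure E} [NeZero μ] (hμ : (stepKernel hS.measurable ν).Invariant μ) :
    attainDom S ν.support {0} ⊆ μ.support :=
  attainDom_subset_of_isClosed Measure.isClosed_support
    (Set.singleton_subset_iff.2 (zero_mem_support_of_invariant hS horbit hν hμ))
    fun _ hu _ hw => add_mem_support_of_invariant hS hμ hu hw

lemma exists_invariant_measure_attainDom_eq_one (hS : Continuous S) {B : Set E}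
    (hB : B.Nonempty) (hcompact : IsCompact (attainDom S ν.support B)) :
    ∃ m : ProbabilityMeasure E, (stepKernel hS.measurable ν).Invariant (m : Measure E) ∧
      (m : Measure E) (attainDom S ν.support B) = 1 := by
  refine (isFeller_stepKernel hS).exists_invariant_of_isCompact hcompact
    (hB.mono subset_attainDom) fun u hu => ?_
  rw [ae_stepKernel_iff _ hcompact.measurableSet]
  exact Eventually.mono Measure.support_mem_ae fun w hw => add_mem_attainDom hS hu hw

end StationaryMeasure

section Trajectory

variable {E : Type} [NormedAddCommGroup E] [MeasurableSpace E] [BorelSpace E]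
  [SecondCountableTopology E] {Ω : Type*} [MeasurableSpace Ω] {P : Measure Ω}
  {S : E → E} {η : ℕ → Ω → E}

lemma measurable_traj_natural (hS : Measurable S) (hη : ∀ k, StronglyMeasurable (η k)) (u : E)
    (k : ℕ) :
    Measurable[Filtration.natural η hη k] (traj S η (fun _ => u) k) := by
  induction k with
  | zero => exact measurable_const
  | succ k ih =>
    exact (hS.comp (ih.mono ((Filtration.natural η hη).mono k.le_succ) le_rfl)).add
      (Filtration.stronglyAdapted_natural hη (k + 1)).measurable

lemma map_traj_succ (hS : Measurable S) (hη : ∀ k, Measurable (η k)) (hindep : iIndepFun η P)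
    (u : E) (k : ℕ) :
    P.map (traj S η (fun _ => u) (k + 1)) =
      stepKernel hS (P.map (η (k + 1))) ∘ₘ P.map (traj S η (fun _ => u) k) := by
  have := hindep.isProbabilityMeasure
  have hη' (k : ℕ) : StronglyMeasurable (η k) := (hη k).stronglyMeasurable
  have hpast := measurable_traj_natural hS hη' u k
  have htraj : IndepFun (traj S η (fun _ => u) k) (η (k + 1)) P :=
    indep_of_indep_of_le_left (hindep.indep_comap_natural_of_lt hη' k.lt_succ_self).symm
      hpast.comap_le
  exact map_add_eq_stepKernel_comp hS (hpast.mono ((Filtration.natural η hη').le k) le_rfl)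
    (hη (k + 1)) htraj

lemma iterate_mem_support_map_traj (hS : Continuous S) (hη : ∀ k, Measurable (η k))
    (hindep : iIndepFun η P) (hη0 : ∀ k, 0 ∈ (P.map (η k)).support) (u : E) (k : ℕ) :
    S^[k] u ∈ (P.map (traj S η (fun _ => u) k)).support := by
  have := hindep.isProbabilityMeasure
  induction k with
  | zero =>
    change u ∈ _
    refine (mem_support_map_iff aemeasurable_const).2 fun U hU => ?_
    rw [Set.preimage_const_of_mem (mem_of_mem_nhds hU), measure_univ]
    exact one_pos
  | succ k ih =>
    have := Measure.isProbabilityMeasure_map (μ := P) (hη (k + 1)).aemeasurable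
    rw [map_traj_succ hS.measurable hη hindep, Function.iterate_succ_apply', ← add_zero (S _)]
    exact (isFeller_stepKernel hS).mem_support_comp ih
      (add_mem_support_stepKernel hS.measurable _ (hη0 (k + 1)))

end Trajectory

section TransitionFunction

variable [MeasurableSpace H] [BorelSpace H] [SecondCountableTopology H] {S : H → H}
  {Ω : Type} [MeasurableSpace Ω] {P : Measure Ω} {η : ℕ → Ω → H}

lemma transP_closedBall_pos (hS : Continuous S) (hη : ∀ k, Measurable (η k))
    (hindep : iIndepFun η P) (hη0 : ∀ k, 0 ∈ (P.map (η k)).support) {u : H}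
    (horbit : Tendsto (fun n => S^[n] u) atTop (𝓝 0)) {r : ℝ} (hr : 0 < r) :
    ∀ᶠ k in atTop, 0 < transP P S η k u (Metric.closedBall 0 r) := by
  have htraj (k : ℕ) : Measurable (traj S η (fun _ => u) k) :=
    (measurable_traj_natural hS.measurable (fun k => (hη k).stronglyMeasurable) u k).mono
      (Filtration.le _ k) le_rfl
  filter_upwards [horbit (Metric.ball_mem_nhds 0 hr)] with k hk
  exact (mem_support_map_iff (htraj k).aemeasurable).1
    (iterate_mem_support_map_traj hS hη hindep hη0 u k) _
    (mem_of_superset (Metric.isOpen_ball.mem_nhds hk) Metric.ball_subset_closedBall)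

lemma transP_one [SFinite P] (hS : Measurable S) (hη : Measurable (η 1)) (u : H) {Γ : Set H}
    (hΓ : MeasurableSet Γ) : transP P S η 1 u Γ = stepKernel hS (P.map (η 1)) u Γ := by
  rw [stepKernel_apply, Measure.map_map (measurable_const_add _) hη,
    Measure.map_apply ((measurable_const_add _).comp hη) hΓ]
  rfl

lemma stationary_iff_invariant [SFinite P] (hS : Measurable S) (hη : Measurable (η 1))
    (μ : Measure H) :
    (∀ Γ, MeasurableSet Γ → μ Γ = ∫⁻ u, transP P S η 1 u Γ ∂μ) ↔
      (stepKernel hS (P.map (η 1))).Invariant μ := by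
  have hbind {Γ : Set H} (hΓ : MeasurableSet Γ) :
      (stepKernel hS (P.map (η 1)) ∘ₘ μ) Γ = ∫⁻ u, transP P S η 1 u Γ ∂μ := by
    rw [Measure.bind_apply hΓ (Kernel.aemeasurable _)]
    exact lintegral_congr fun u => (transP_one hS hη u hΓ).symm
  rw [Kernel.Invariant, Measure.ext_iff]
  exact forall₂_congr fun Γ hΓ => by rw [hbind hΓ, eq_comm]

end TransitionFunction

section Stability

variable {V : Type} [NormedAddCommGroup V] [InnerProductSpace ℝ V] {S : V → V}

lemma eventually_norm_iterate_le {E : Type*} [SeminormedAddCommGroup E] {S : E → E}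
    {R r a : ℝ} {n₀ : ℕ} (ha : 0 ≤ a) (ha1 : a ≤ 1) (hr : 0 ≤ r) (hrR : r ≤ R)
    (hS : ∀ u ∈ Metric.closedBall (0 : E) R, ∀ n, n₀ ≤ n → ‖S^[n] u‖ ≤ max (a * ‖u‖) r)
    {u : E} (hu : ‖u‖ ≤ R) (m : ℕ) : ∀ᶠ n in atTop, ‖S^[n] u‖ ≤ max (a ^ m * R) r := by
  have hR : 0 ≤ R := hr.trans hrR
  induction m with
  | zero =>
    filter_upwards [eventually_ge_atTop n₀] with n hn
    refine (hS u (mem_closedBall_zero_iff.2 hu) n hn).trans (max_le_max_right r ?_)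
    rw [pow_zero]
    exact mul_le_mul ha1 hu (norm_nonneg u) zero_le_one
  | succ m ih =>
    obtain ⟨N, hN⟩ := ih.exists
    have hNR : ‖S^[N] u‖ ≤ R :=
      hN.trans (max_le (mul_le_of_le_one_left hR (pow_le_one₀ ha ha1)) hrR)
    filter_upwards [eventually_ge_atTop (n₀ + N)] with n hn
    obtain ⟨j, rfl⟩ := Nat.exists_eq_add_of_le' (Nat.le_of_add_left_le hn)
    rw [Function.iterate_add_apply]
    calc ‖S^[j] (S^[N] u)‖ ≤ max (a * ‖S^[N] u‖) r :=
          hS _ (mem_closedBall_zero_iff.2 hNR) j (Nat.le_of_add_le_add_right hn)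
      _ ≤ max (a * max (a ^ m * R) r) r := by gcongr
      _ ≤ max (a ^ (m + 1) * R) r := by
          rw [mul_max_of_nonneg _ _ ha, ← mul_assoc, ← pow_succ', max_assoc]
          exact max_le_max_left _ (max_le (mul_le_of_le_one_left hr ha1) le_rfl)

lemma CondA.tendsto_iterate (hA : CondA S) (u : V) :
    Tendsto (fun n => S^[n] u) atTop (𝓝 0) := by
  refine Metric.tendsto_nhds.2 fun ε hε => ?_
  obtain ⟨-, -, a, ha, ha1, n₀, -, -, hS⟩ :=
    hA.2 (‖u‖ + ε) (ε / 2) (half_pos hε) (by linarith [norm_nonneg u])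
  obtain ⟨m, hm⟩ : ∃ m : ℕ, a ^ m * (‖u‖ + ε) < ε := by
    have hlim := (tendsto_pow_atTop_nhds_zero_of_lt_one ha.le ha1).mul_const (‖u‖ + ε)
    rw [zero_mul] at hlim
    exact (hlim.eventually_lt_const hε).exists
  filter_upwards [eventually_norm_iterate_le ha.le ha1.le (half_pos hε).le
    (by linarith [norm_nonneg u]) hS (le_add_of_nonneg_right hε.le) m] with n hn
  rw [dist_zero_right]
  exact hn.trans_lt (max_lt hm (half_lt_self hε))

lemma CondA.isBounded_image_closedBall (hA : CondA S) {R : ℝ} (hR : 0 < R) :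
    Bornology.IsBounded (S '' Metric.closedBall 0 R) := by
  obtain ⟨C, hC, -, -, -, -, -, hlip, -⟩ := hA.2 R (R / 2) (half_pos hR) (half_lt_self hR)
  refine (Metric.isBounded_iff_subset_closedBall (S 0)).2
    ⟨C * R, Set.image_subset_iff.2 fun u hu => ?_⟩
  calc dist (S u) (S 0) ≤ C * ‖u - 0‖ := by
        rw [dist_eq_norm]
        exact hlip u hu 0 (Metric.mem_closedBall_self hR.le)
    _ ≤ C * R := by
        rw [sub_zero]
        exact mul_le_mul_of_nonneg_left (mem_closedBall_zero_iff.1 hu) hC.le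

end Stability

section Compactness

variable {V : Type} [NormedAddCommGroup V] [InnerProductSpace ℝ V]

lemma totallyBounded_of_forall_exists_dist_le {X : Type*} [PseudoMetricSpace X] {s : Set X}
    (h : ∀ ε > 0, ∃ t, TotallyBounded t ∧ ∀ x ∈ s, ∃ y ∈ t, dist x y ≤ ε) :
    TotallyBounded s := by
  refine Metric.totallyBounded_iff.2 fun ε hε => ?_
  obtain ⟨t, ht, hst⟩ := h (ε / 2) (half_pos hε)
  obtain ⟨c, hc, htc⟩ := Metric.totallyBounded_iff.1 ht (ε / 2) (half_pos hε)
  refine ⟨c, hc, fun x hx => ?_⟩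
  obtain ⟨y, hy, hxy⟩ := hst x hx
  obtain ⟨z, hz, hyz⟩ := Set.mem_iUnion₂.1 (htc hy)
  refine Set.mem_iUnion₂.2 ⟨z, hz, ?_⟩
  calc dist x z ≤ dist x y + dist y z := dist_triangle x y z
    _ < ε := by linarith [Metric.mem_ball.1 hyz]

lemma totallyBounded_image_projB (e : HilbertBasis ℕ ℝ V) (N : ℕ) {s : Set V}
    (hs : Bornology.IsBounded s) : TotallyBounded (projB e N '' s) := by
  let coords : V →L[ℝ] (Fin N → ℝ) := ContinuousLinearMap.pi fun i => innerSL ℝ (e i)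
  let combine : (Fin N → ℝ) → V := fun x => ∑ i, x i • e i
  have hfactor : projB e N = combine ∘ coords := by
    funext u
    simp only [projB, Finset.sum_range, HilbertBasis.repr_apply_apply]
    rfl
  have hcompact : IsCompact (closure (coords '' s)) :=
    (coords.lipschitz.isBounded_image hs).isCompact_closure
  have hcombine : Continuous combine := by fun_prop
  rw [hfactor, Set.image_comp]
  exact (hcompact.image hcombine).totallyBounded.subset (Set.image_mono subset_closure)

/-- The squeezing estimate makes `S u` uniformly close to `S 0 + 𝖯_N (S u - S 0)`. -/
lemma CondC.totallyBounded_image {S : V → V} {e : HilbertBasis ℕ ℝ V} (hC : CondC S e) {R : ℝ}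
    (hR : 0 < R) (hbdd : Bornology.IsBounded (S '' Metric.closedBall 0 R)) :
    TotallyBounded (S '' Metric.closedBall 0 R) := by
  obtain ⟨γ, hγ, -, hγ0, hsqueeze⟩ := hC R hR
  let s : Set V := (fun v => v - S 0) '' (S '' Metric.closedBall 0 R)
  have hs : Bornology.IsBounded s := (LipschitzWith.id.sub (.const _)).isBounded_image hbdd
  refine totallyBounded_of_forall_exists_dist_le fun ε hε => ?_
  obtain ⟨N, hN⟩ : ∃ N, γ N * R < ε := by
    have hlim := hγ0.mul_const R
    rw [zero_mul] at hlim
    exact (hlim.eventually_lt_const hε).exists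
  refine ⟨(S 0 + ·) '' (projB e N '' s),
    (totallyBounded_image_projB e N hs).image
      (uniformContinuous_const.add uniformContinuous_id), ?_⟩
  rintro _ ⟨u, hu, rfl⟩
  refine ⟨_, ⟨_, ⟨_, ⟨_, ⟨u, hu, rfl⟩, rfl⟩, rfl⟩, rfl⟩, ?_⟩
  calc dist (S u) (S 0 + projB e N (S u - S 0))
      = ‖(S u - S 0) - projB e N (S u - S 0)‖ := by rw [dist_eq_norm, sub_sub]
    _ ≤ γ N * ‖u - 0‖ := hsqueeze N u hu 0 (Metric.mem_closedBall_self hR.le)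
    _ ≤ γ N * R := by
        rw [sub_zero]
        exact mul_le_mul_of_nonneg_left (mem_closedBall_zero_iff.1 hu) (hγ N).le
    _ ≤ ε := hN.le

lemma isCompact_attainDom_zero {S : H → H} {e : HilbertBasis ℕ ℝ H} {K : Set H}
    (hK : IsCompact K) (hA : CondA S) (hB : CondB S K) (hC : CondC S e) :
    IsCompact (attainDom S K {0}) := by
  obtain ⟨ρ, hρ, k₀, -, habsorb⟩ := hB
  have himage : IsCompact (closure (S '' Metric.closedBall 0 ρ)) :=
    (hC.totallyBounded_image hρ (hA.isBounded_image_closedBall hρ)).closure.isCompact_of_isClosed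
      isClosed_closure
  refine isCompact_attainDom hA.1.continuous hK isCompact_singleton himage (k₀ := k₀ 0) ?_
  simpa only [Metric.closedBall_zero] using habsorb 0 le_rfl

end Compactness

section Noise

variable {V : Type*} [NormedAddCommGroup V] [InnerProductSpace ℝ V]
  {ι Ω : Type*} [MeasurableSpace Ω] {P : Measure Ω}

lemma ae_mem_of_map_eq_withDensity {E : Type*} [MeasurableSpace E] {μ : Measure E} {X : Ω → E}
    (hX : AEMeasurable X P) {f : E → ℝ≥0∞} (hf : Measurable f) (hlaw : P.map X = μ.withDensity f)
    {s : Set E} (hs : Function.support f ⊆ s) : ∀ᵐ ω ∂P, X ω ∈ s := by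
  refine ae_of_ae_map hX ?_
  rw [hlaw, ae_withDensity_iff hf]
  exact .of_forall hs

lemma hasSum_sq_of_hasSum_smul_orthonormal {e : ι → V} (he : Orthonormal ℝ e) {a : ι → ℝ} {v : V}
    (h : HasSum (fun j => a j • e j) v) : HasSum (fun j => a j ^ 2) (‖v‖ ^ 2) := by
  have hpartial (s : Finset ι) : ‖∑ j ∈ s, a j • e j‖ ^ 2 = ∑ j ∈ s, a j ^ 2 := by
    rw [← real_inner_self_eq_norm_sq, he.inner_sum]
    exact Finset.sum_congr rfl fun j _ => (sq (a j)).symm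
  exact (h.norm.pow 2).congr hpartial

lemma continuousOn_tsum_mul_sq {b : ι → ℝ} (hb : Summable fun j => b j ^ 2) :
    ContinuousOn (fun x : ι → ℝ => ∑' j, (b j * x j) ^ 2) {x | ∀ j, |x j| ≤ 1} := by
  refine continuousOn_tsum (fun j => by fun_prop) hb fun j x hx => ?_
  rw [Real.norm_of_nonneg (sq_nonneg _), mul_pow]
  exact mul_le_of_le_one_right (sq_nonneg _) ((sq_le_one_iff_abs_le_one _).2 (hx j))

lemma zero_mem_support_map_of_hasSum_orthonormal [Countable ι] [MeasurableSpace V]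
    [OpensMeasurableSpace V] {e : ι → V} (he : Orthonormal ℝ e) {b : ι → ℝ}
    (hb : Summable fun j => b j ^ 2) {X : ι → Ω → ℝ} (hX : iIndepFun X P)
    (hXmeas : ∀ j, Measurable (X j)) (hX1 : ∀ j, ∀ᵐ ω ∂P, |X j ω| ≤ 1)
    (hX0 : ∀ j, 0 ∈ (P.map (X j)).support) {Y : Ω → V} (hY : AEMeasurable Y P)
    (hsum : ∀ ω, HasSum (fun j => (b j * X j ω) • e j) (Y ω)) : 0 ∈ (P.map Y).support := by
  refine (mem_support_map_iff hY).2 fun U hU => ?_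
  obtain ⟨ε, hε, hεU⟩ := Metric.mem_nhds_iff.1 hU
  have hsmall : ∀ᶠ x : ι → ℝ in 𝓝 0, (∀ j, |x j| ≤ 1) → ∑' j, (b j * x j) ^ 2 < ε ^ 2 := by
    refine eventually_nhdsWithin_iff.1
      ((continuousOn_tsum_mul_sq hb 0 (by simp)).eventually_lt_const ?_)
    simpa using pow_pos hε 2
  refine (measure_pi_preimage_pos_of_mem_support hX hXmeas hX0 hsmall).trans_le
    (measure_mono_ae ?_)
  filter_upwards [ae_all_iff.2 hX1] with ω hω hmem
  refine hεU (mem_ball_zero_iff.2 (lt_of_pow_lt_pow_left₀ 2 hε.le ?_))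
  rw [← (hasSum_sq_of_hasSum_smul_orthonormal he (hsum ω)).tsum_eq]
  exact hmem hω

end Noise

section Series

variable {E V κ Ω : Type*} [MeasurableSpace E] [NormedAddCommGroup V] [SecondCountableTopology V]
  [MeasurableSpace V] [BorelSpace V]

lemma iIndepFun_curry {ι : Type*} {κ : ι → Type*} {E : ∀ i, κ i → Type*}
    [∀ i j, MeasurableSpace (E i j)] [MeasurableSpace Ω] {P : Measure Ω}
    {X : ∀ i j, Ω → E i j} (hmeas : ∀ i j, Measurable (X i j))
    (hX : iIndepFun (fun (p : (i : ι) × κ i) ω => X p.1 p.2 ω) P) :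
    iIndepFun (fun i ω j => X i j ω) P := by
  have := hX.isProbabilityMeasure
  have (i : ι) (j : κ i) : IsProbabilityMeasure (P.map (X i j)) :=
    Measure.isProbabilityMeasure_map (hmeas i j).aemeasurable
  have hrow (i : ι) :
      P.map (fun ω j => X i j ω) = Measure.infinitePi fun j => P.map (X i j) :=
    (hX.precomp (sigma_mk_injective (i := i))).map_fun_eq_infinitePi_map (hmeas i)
  rw [iIndepFun_iff_map_fun_eq_infinitePi_map fun i => measurable_pi_lambda _ (hmeas i)]
  simp only [hrow]
  rw [← Measure.infinitePi_map_piCurry fun i j => P.map (X i j),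
    ← hX.map_fun_eq_infinitePi_map fun p => hmeas p.1 p.2,
    Measure.map_map (MeasurableEquiv.measurable _) (by fun_prop)]
  rfl

lemma measurable_of_hasSum {_ : MeasurableSpace Ω} {f : ℕ → Ω → V} {Y : Ω → V}
    (hf : ∀ j, Measurable (f j)) (hsum : ∀ ω, HasSum (fun j => f j ω) (Y ω)) : Measurable Y :=
  measurable_of_tendsto_metrizable
    (fun n => Finset.measurable_fun_sum (Finset.range n) fun j _ => hf j)
    (tendsto_pi_nhds.2 fun ω => (hsum ω).tendsto_sum_nat)

lemma iIndepFun_of_hasSum [MeasurableSpace Ω] {P : Measure Ω} {X : ℕ → κ → Ω → E}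
    (hX : iIndepFun (fun jk : ℕ × κ => X jk.1 jk.2) P) (hmeas : ∀ j k, Measurable (X j k))
    {g : ℕ → E → V} (hg : ∀ j, Measurable (g j)) {Y : κ → Ω → V}
    (hsum : ∀ k ω, HasSum (fun j => g j (X j k ω)) (Y k ω)) : iIndepFun Y P := by
  have hswap : Function.Injective fun p : (_ : κ) × ℕ => (p.2, p.1) :=
    Prod.swap_injective.comp (Equiv.sigmaEquivProd κ ℕ).injective
  have hrows : iIndepFun (fun k ω j => X j k ω) P :=
    iIndepFun_curry (fun k j => hmeas j k) (hX.precomp hswap)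
  refine iIndep_of_iIndep_of_le hrows fun k => Measurable.comap_le ?_
  refine measurable_of_hasSum (fun j => (hg j).comp ?_) (hsum k)
  exact (measurable_pi_apply j).comp (comap_measurable fun ω j => X j k ω)

end Series

section CondD

variable {V : Type} [NormedAddCommGroup V] [InnerProductSpace ℝ V] [MeasurableSpace V]
  {Ω : Type*} [MeasurableSpace Ω] {P : Measure Ω} {e : HilbertBasis ℕ ℝ V} {η : ℕ → Ω → V}
  {b : ℕ → ℝ} {ξ : ℕ → ℕ → Ω → ℝ} {p : ℕ → ℝ → ℝ}

lemma CondD.zero_mem_support_map [OpensMeasurableSpace V] (hD : CondD P e η b ξ p) {k : ℕ}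
    (hη : Measurable (η k)) : 0 ∈ (P.map (η k)).support := by
  obtain ⟨-, hb, hsum, hmeas, hξ, hlaw, hlip, hp0, hsupp⟩ := hD
  have hp (j : ℕ) : Continuous (p j) := (hlip j).choose_spec.continuous
  have hdensity (j : ℕ) : Continuous fun x => ENNReal.ofReal (p j x) :=
    ENNReal.continuous_ofReal.comp (hp j)
  have hcol : iIndepFun (fun j => ξ j k) P := hξ.precomp (Prod.mk_left_injective k)
  have hbound (j : ℕ) : ∀ᵐ ω ∂P, |ξ j k ω| ≤ 1 := by
    have hdsupp : (Function.support fun x => ENNReal.ofReal (p j x)) ⊆ Set.Icc (-1) 1 :=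
      (Function.support_comp_subset ENNReal.ofReal_zero (p j)).trans (hsupp j)
    filter_upwards [ae_mem_of_map_eq_withDensity (hmeas j k).aemeasurable (hdensity j).measurable
      (hlaw j k) hdsupp] with ω hω
    exact abs_le.2 hω
  have hzero (j : ℕ) : 0 ∈ (P.map (ξ j k)).support := by
    rw [hlaw j k]
    exact mem_support_withDensity (hdensity j) (ENNReal.ofReal_pos.2 (hp0 j)).ne'
  exact zero_mem_support_map_of_hasSum_orthonormal e.orthonormal hb hcol (fun j => hmeas j k)
    hbound hzero hη.aemeasurable (hsum k)

lemma CondD.iIndepFun [BorelSpace V] [SecondCountableTopology V] (hD : CondD P e η b ξ p) :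
    ProbabilityTheory.iIndepFun η P := by
  obtain ⟨-, -, hsum, hmeas, hξ, -⟩ := hD
  exact iIndepFun_of_hasSum hξ hmeas (g := fun j x => (b j * x) • e j) (fun j => by fun_prop) hsum

end CondD

theorem statement19_general
    {H : Type} [NormedAddCommGroup H] [InnerProductSpace ℝ H] [CompleteSpace H]
    [SecondCountableTopology H] [MeasurableSpace H] [BorelSpace H]
    {Ω : Type} [MeasurableSpace Ω] (P : Measure Ω) (S : H → H) (hS : Continuous S)
    (horbit : ∀ u, Tendsto (fun n => S^[n] u) atTop (𝓝 0))
    (η : ℕ → Ω → H) (hηmeas : ∀ k, Measurable (η k)) (hindep : iIndepFun η P)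
    (hη0 : ∀ k, 0 ∈ (P.map (η k)).support)
    (K : Set H) (hK : K = msupp (P.map (η 1))) (hcompact : IsCompact (attainDom S K {0})) :
    (∀ u : H, ∀ r : ℝ, 0 < r →
      ∃ k₁ : ℕ, ∀ k : ℕ, k₁ ≤ k → 0 < transP P S η k u (Metric.closedBall (0 : H) r)) ∧
    ∀ μ : ProbabilityMeasure H,
      (∀ Γ : Set H, MeasurableSet Γ →
        (μ : Measure H) Γ = ∫⁻ u, transP P S η 1 u Γ ∂(μ : Measure H)) →
      (∀ μ' : ProbabilityMeasure H,
        (∀ Γ : Set H, MeasurableSet Γ →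
          (μ' : Measure H) Γ = ∫⁻ u, transP P S η 1 u Γ ∂(μ' : Measure H)) →
        μ' = μ) →
      ((μ : Measure H) (attainDom S K ({0} : Set H)) = 1 ∧
        ∀ U : Set H, IsOpen U → (U ∩ attainDom S K ({0} : Set H)).Nonempty →
          0 < (μ : Measure H) U) := by
  have := hindep.isProbabilityMeasure
  have := Measure.isProbabilityMeasure_map (μ := P) (hηmeas 1).aemeasurable
  rw [msupp_eq_support] at hK
  subst hK
  refine ⟨fun u r hr => eventually_atTop.1
    (transP_closedBall_pos hS hηmeas hindep hη0 (horbit u) hr), fun μ hμ hunique => ⟨?_, ?_⟩⟩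
  · obtain ⟨m, hm, hmass⟩ :=
      exists_invariant_measure_attainDom_eq_one hS (Set.singleton_nonempty 0) hcompact
    rwa [hunique m ((stationary_iff_invariant hS.measurable (hηmeas 1) m).2 hm)] at hmass
  · rintro U hU ⟨u, huU, hu⟩
    have hinv := (stationary_iff_invariant hS.measurable (hηmeas 1) μ).1 hμ
    exact (Measure.mem_support_iff_forall u).1
      (attainDom_subset_support_of_invariant hS horbit (hη0 1) hinv hu) U (hU.mem_nhds huU)

/-- **Support of the stationary measure (end of Section 1.1)**: under Conditions (A)–(D) with
`b_j ≠ 0` (so that `0 ∈ supp 𝒟(η₁)`), for any `u ∈ 𝒜` and `r > 0` one has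
`P_k(u, B_H(r)) > 0` for all sufficiently large `k`; consequently, if `μ` is the unique
stationary measure of the chain, then `supp μ = 𝒜`. -/
theorem statement19
    {H : Type} [NormedAddCommGroup H] [InnerProductSpace ℝ H] [CompleteSpace H]
    [SecondCountableTopology H] [MeasurableSpace H] [BorelSpace H]
    {Ω : Type} [MeasurableSpace Ω] (P : Measure Ω) [IsProbabilityMeasure P]
    (S : H → H) (e : HilbertBasis ℕ ℝ H)
    (η : ℕ → Ω → H) (hηmeas : ∀ k, Measurable (η k))
    (b : ℕ → ℝ) (ξ : ℕ → ℕ → Ω → ℝ) (p : ℕ → ℝ → ℝ)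
    (K : Set H) (hK : K = msupp (Measure.map (η 1) P)) (hKcomp : IsCompact K)
    (hA : CondA S) (hB : CondB S K) (hC : CondC S e) (hD : CondD P e η b ξ p)
    (hb : ∀ j, b j ≠ 0) :
    -- positivity of the transition probabilities on balls around the origin
    (∀ u ∈ attainDom S K ({0} : Set H), ∀ r : ℝ, 0 < r →
      ∃ k₁ : ℕ, ∀ k : ℕ, k₁ ≤ k →
        0 < transP P S η k u (Metric.closedBall (0 : H) r)) ∧
    -- the unique stationary measure is supported exactly on `𝒜`
    ∀ μ : ProbabilityMeasure H,
      (∀ Γ : Set H, MeasurableSet Γ →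
        (μ : Measure H) Γ = ∫⁻ u, transP P S η 1 u Γ ∂(μ : Measure H)) →
      (∀ μ' : ProbabilityMeasure H,
        (∀ Γ : Set H, MeasurableSet Γ →
          (μ' : Measure H) Γ = ∫⁻ u, transP P S η 1 u Γ ∂(μ' : Measure H)) →
        μ' = μ) →
      ((μ : Measure H) (attainDom S K ({0} : Set H)) = 1 ∧
        ∀ U : Set H, IsOpen U → (U ∩ attainDom S K ({0} : Set H)).Nonempty →
          0 < (μ : Measure H) U) := by
  obtain ⟨hpos, hsupp⟩ := statement19_general P S hA.1.continuous hA.tendsto_iterate η hηmeas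
    hD.iIndepFun (fun k => hD.zero_mem_support_map (hηmeas k)) K hK
    (isCompact_attainDom_zero hKcomp hA hB hC)
  exact ⟨fun u _ => hpos u, hsupp⟩
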